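/- Let d ≥ 3, R > 0, set D_e = {x ∈ ℝ^d : ‖x‖ > R}, and let f be a continuous real-valued function on Σ_R. Define Hf(x) = ∫_{Σ_R} (‖x‖² − R²)/(Ω_d R ‖x − η‖^d) f(η) σ(dη) for x ∈ D_e. Then Hf is harmonic on D_e, extends continuously to the closure {‖x‖ ≥ R} with boundary values Hf = f on Σ_R, and Hf(x) → 0 as ‖x‖ → ∞; moreover, Hf is the unique function with these three properties. -/

import Mathlib

open MeasureTheory

/-- The surface area `Ω_d` of the unit sphere in `ℝ^d`, i.e. the `(d-1)`-dimensional Hausdorff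
measure of `{x : ‖x‖ = 1}`. -/
noncomputable def unitSphereArea (d : ℕ) : ℝ :=
  (μH[(d : ℝ) - 1] (Metric.sphere (0 : EuclideanSpace ℝ (Fin d)) 1)).toReal

/-- The exterior Poisson integral `Hf(x) = ∫_{Σ_R} (‖x‖² - R²)/(Ω_d R ‖x - η‖^d) f(η) σ(dη)`
of a boundary function `f` on the sphere `Σ_R`, `σ` being the `(d-1)`-dimensional surface
(Hausdorff) measure. -/
noncomputable def extPoissonIntegral (d : ℕ) (R : ℝ) (f : EuclideanSpace ℝ (Fin d) → ℝ)
    (x : EuclideanSpace ℝ (Fin d)) : ℝ :=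
  ∫ η in Metric.sphere (0 : EuclideanSpace ℝ (Fin d)) R,
    (‖x‖ ^ 2 - R ^ 2) / (unitSphereArea d * R * ‖x - η‖ ^ d) * f η ∂(μH[(d : ℝ) - 1])

/-- `g` solves the exterior Dirichlet problem on `D_e = {‖x‖ > R}` with boundary data `f`:
it is harmonic on `D_e` (twice continuously differentiable with vanishing Laplacian),
continuous on the closure `{‖x‖ ≥ R}` with boundary values `f` on `Σ_R`, and tends to `0` as
`‖x‖ → ∞`. -/
def IsExtDirichletSolution (d : ℕ) (R : ℝ) (f g : EuclideanSpace ℝ (Fin d) → ℝ) : Prop :=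
  ContDiffOn ℝ 2 g {x | R < ‖x‖} ∧
  (∀ x : EuclideanSpace ℝ (Fin d), R < ‖x‖ →
      ∑ i : Fin d,
        fderiv ℝ (fun y => fderiv ℝ g y (EuclideanSpace.single i (1 : ℝ))) x
          (EuclideanSpace.single i (1 : ℝ)) = 0) ∧
  ContinuousOn g {x | R ≤ ‖x‖} ∧
  (∀ η : EuclideanSpace ℝ (Fin d), ‖η‖ = R → g η = f η) ∧
  Filter.Tendsto g (Filter.comap norm Filter.atTop) (nhds 0)

/-!
Uniqueness is the maximum principle for the difference of two solutions, which vanishes on the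
sphere and at infinity.

For existence, the kernel `(‖x‖ ^ 2 - R ^ 2) / ‖x - η‖ ^ d` is harmonic in `x` for `η` on the
sphere, so the integral is harmonic outside the ball. The total mass of the kernel over the sphere
is a rotation invariant harmonic function of `x` vanishing at infinity, hence a multiple of
`‖x‖ ^ (2 - d)`, and the asymptotics at infinity identify the multiple; in particular the normalized
kernel has mass tending to `1` as `x` approaches the sphere. Being nonnegative and concentrating at
`η₀` as `x → η₀`, it is an approximate identity there, which gives the boundary values. At infinity
the integral is `O(‖x‖ ^ (2 - d))`, which tends to `0` because `d ≥ 3`.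
-/

open Metric Set Filter Topology Module InnerProductSpace Laplacian Gradient Function

section Laplacian

variable {E F : Type*} [NormedAddCommGroup E] [InnerProductSpace ℝ E]
  [NormedAddCommGroup F] [NormedSpace ℝ F] {x : E}

theorem hasFDerivAt_fderiv {f : E → F} (hf : ContDiffAt ℝ 2 f x) :
    HasFDerivAt (fderiv ℝ f) (fderiv ℝ (fderiv ℝ f) x) x :=
  ((hf.fderiv_right (m := 1) le_rfl).differentiableAt one_ne_zero).hasFDerivAt

theorem contDiff_norm_sub_sq (η : E) : ContDiff ℝ 2 fun x ↦ ‖x - η‖ ^ 2 :=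
  (contDiff_id.sub contDiff_const).norm_sq ℝ

variable [FiniteDimensional ℝ E] {f g u : E → ℝ}

theorem laplacian_eq_sum_fderiv_fderiv {ι : Type*} [Fintype ι] (f : E → F)
    (v : OrthonormalBasis ι ℝ E) (x : E) :
    Δ f x = ∑ i, fderiv ℝ (fderiv ℝ f) x (v i) (v i) := by
  simp [laplacian_eq_iteratedFDeriv_orthonormalBasis f v, iteratedFDeriv_two_apply]

theorem sum_fderiv_mul_fderiv {ι : Type*} [Fintype ι] (v : OrthonormalBasis ι ℝ E) :
    ∑ i, fderiv ℝ f x (v i) * fderiv ℝ g x (v i) = ⟪∇ f x, ∇ g x⟫_ℝ := by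
  refine (Finset.sum_congr rfl fun i _ ↦ ?_).trans (v.sum_inner_mul_inner (∇ f x) (∇ g x))
  rw [inner_gradient_left, real_inner_comm, inner_gradient_left]

theorem laplacian_mul (hf : ContDiffAt ℝ 2 f x) (hg : ContDiffAt ℝ 2 g x) :
    Δ (f * g) x = f x * Δ g x + 2 * ⟪∇ f x, ∇ g x⟫_ℝ + g x * Δ f x := by
  have hf' : HasFDerivAt f (fderiv ℝ f x) x := (hf.differentiableAt two_ne_zero).hasFDerivAt
  have hg' : HasFDerivAt g (fderiv ℝ g x) x := (hg.differentiableAt two_ne_zero).hasFDerivAt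
  have fderiv_mul_nhds : fderiv ℝ (f * g) =ᶠ[𝓝 x] f • fderiv ℝ g + g • fderiv ℝ f := by
    filter_upwards [hf.eventually (by simp), hg.eventually (by simp)] with y hfy hgy
    exact fderiv_mul (hfy.differentiableAt two_ne_zero) (hgy.differentiableAt two_ne_zero)
  have second_fderiv (w : E) : fderiv ℝ (fderiv ℝ (f * g)) x w w =
      f x * fderiv ℝ (fderiv ℝ g) x w w + 2 * (fderiv ℝ f x w * fderiv ℝ g x w)
        + g x * fderiv ℝ (fderiv ℝ f) x w w := by
    rw [(((hf'.smul (hasFDerivAt_fderiv hg)).add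
      (hg'.smul (hasFDerivAt_fderiv hf))).congr_of_eventuallyEq fderiv_mul_nhds).fderiv]
    simp
    ring
  simp only [laplacian_eq_sum_fderiv_fderiv _ (stdOrthonormalBasis ℝ E), second_fderiv,
    Finset.sum_add_distrib, ← Finset.mul_sum, sum_fderiv_mul_fderiv]

theorem laplacian_comp {φ : ℝ → ℝ} (hφ : ContDiffAt ℝ 2 φ (u x)) (hu : ContDiffAt ℝ 2 u x) :
    Δ (φ ∘ u) x = deriv (deriv φ) (u x) * ‖∇ u x‖ ^ 2 + deriv φ (u x) * Δ u x := by
  have hu' : HasFDerivAt u (fderiv ℝ u x) x := (hu.differentiableAt two_ne_zero).hasFDerivAt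
  have hφ' : HasDerivAt (deriv φ) (deriv (deriv φ) (u x)) (u x) :=
    ((hφ.derivWithin (m := 1) le_rfl).differentiableAt one_ne_zero).hasDerivAt
  have fderiv_comp_nhds : fderiv ℝ (φ ∘ u) =ᶠ[𝓝 x] (deriv φ ∘ u) • fderiv ℝ u := by
    filter_upwards [hu.eventually (by simp),
      hu.continuousAt.eventually (hφ.eventually (by simp))] with y hy hφy
    exact ((hφy.differentiableAt two_ne_zero).hasDerivAt.comp_hasFDerivAt y
      (hy.differentiableAt two_ne_zero).hasFDerivAt).fderiv
  have second_fderiv (w : E) : fderiv ℝ (fderiv ℝ (φ ∘ u)) x w w =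
      deriv (deriv φ) (u x) * (fderiv ℝ u x w * fderiv ℝ u x w)
        + deriv φ (u x) * fderiv ℝ (fderiv ℝ u) x w w := by
    rw [(((hφ'.comp_hasFDerivAt x hu').smul (hasFDerivAt_fderiv hu)).congr_of_eventuallyEq
      fderiv_comp_nhds).fderiv]
    simp
    ring
  simp only [laplacian_eq_sum_fderiv_fderiv _ (stdOrthonormalBasis ℝ E), second_fderiv,
    Finset.sum_add_distrib, ← Finset.mul_sum, sum_fderiv_mul_fderiv, real_inner_self_eq_norm_sq]

theorem hasGradientAt_norm_sub_sq (η x : E) :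
    HasGradientAt (fun x ↦ ‖x - η‖ ^ 2) ((2 : ℝ) • (x - η)) x := by
  rw [hasGradientAt_iff_hasFDerivAt]
  refine ((hasFDerivAt_id (𝕜 := ℝ) x).sub_const η).norm_sq.congr_fderiv ?_
  ext
  simp

theorem laplacian_norm_sub_sq (η x : E) :
    Δ (fun x : E ↦ ‖x - η‖ ^ 2) x = 2 * finrank ℝ E := by
  have fderiv_eq : fderiv ℝ (fun x : E ↦ ‖x - η‖ ^ 2) = fun x ↦ (2 : ℝ) • innerSL ℝ (x - η) := by
    ext x w
    simp [(hasGradientAt_norm_sub_sq η x).fderiv_apply, inner_smul_left, inner_sub_left]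
  have second_fderiv (w : E) :
      fderiv ℝ (fderiv ℝ (fun x : E ↦ ‖x - η‖ ^ 2)) x w w = 2 * ‖w‖ ^ 2 := by
    have : HasFDerivAt (fun x : E ↦ (2 : ℝ) • innerSL ℝ (x - η)) ((2 : ℝ) • innerSL ℝ) x :=
      ((innerSL ℝ).hasFDerivAt.comp x ((hasFDerivAt_id x).sub_const η)).const_smul (2 : ℝ)
    rw [fderiv_eq, this.fderiv]
    exact congrArg (2 * ·) (real_inner_self_eq_norm_sq w)
  simp only [laplacian_eq_sum_fderiv_fderiv _ (stdOrthonormalBasis ℝ E), second_fderiv]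
  simp [mul_comm]

theorem gradient_norm_sub_sq (η x : E) : ∇ (fun x ↦ ‖x - η‖ ^ 2) x = (2 : ℝ) • (x - η) :=
  (hasGradientAt_norm_sub_sq η x).gradient

theorem gradient_norm_sub_sq_rpow {η : E} (hx : x ≠ η) (p : ℝ) :
    ∇ (fun x ↦ (‖x - η‖ ^ 2) ^ p) x = (2 * p * (‖x - η‖ ^ 2) ^ (p - 1)) • (x - η) := by
  have hs : ‖x - η‖ ^ 2 ≠ 0 := pow_ne_zero 2 (norm_ne_zero_iff.2 (sub_ne_zero.2 hx))
  refine HasGradientAt.gradient (hasGradientAt_iff_hasFDerivAt.2 ?_)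
  refine ((Real.hasDerivAt_rpow_const (.inl hs)).comp_hasFDerivAt x
    (hasGradientAt_norm_sub_sq η x).hasFDerivAt).congr_fderiv ?_
  ext
  simp
  ring

theorem laplacian_norm_sub_sq_rpow {η : E} (hx : x ≠ η) (p : ℝ) :
    Δ (fun x ↦ (‖x - η‖ ^ 2) ^ p) x =
      2 * p * (2 * p - 2 + finrank ℝ E) * (‖x - η‖ ^ 2) ^ (p - 1) := by
  have hs : ‖x - η‖ ^ 2 ≠ 0 := pow_ne_zero 2 (norm_ne_zero_iff.2 (sub_ne_zero.2 hx))
  have deriv_deriv_rpow : deriv (deriv fun t : ℝ ↦ t ^ p) (‖x - η‖ ^ 2) * ‖x - η‖ ^ 2 =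
      p * (p - 1) * (‖x - η‖ ^ 2) ^ (p - 1) := by
    rw [Real.deriv_rpow_const', deriv_const_mul_field, Real.deriv_rpow_const,
      Real.rpow_sub_one hs (p - 1), mul_assoc, mul_assoc, div_mul_cancel₀ _ hs, mul_assoc]
  calc Δ (fun x ↦ (‖x - η‖ ^ 2) ^ p) x
    _ = deriv (deriv fun t : ℝ ↦ t ^ p) (‖x - η‖ ^ 2) * ‖(2 : ℝ) • (x - η)‖ ^ 2
          + deriv (fun t : ℝ ↦ t ^ p) (‖x - η‖ ^ 2) * (2 * finrank ℝ E) := by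
      rw [← gradient_norm_sub_sq, ← laplacian_norm_sub_sq η x]
      exact laplacian_comp (φ := fun t ↦ t ^ p) (Real.contDiffAt_rpow_const (.inl hs))
        (contDiff_norm_sub_sq η).contDiffAt
    _ = 4 * (deriv (deriv fun t : ℝ ↦ t ^ p) (‖x - η‖ ^ 2) * ‖x - η‖ ^ 2)
          + p * (‖x - η‖ ^ 2) ^ (p - 1) * (2 * finrank ℝ E) := by
      rw [Real.deriv_rpow_const, norm_smul, Real.norm_two]
      ring
    _ = 2 * p * (2 * p - 2 + finrank ℝ E) * (‖x - η‖ ^ 2) ^ (p - 1) := by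
      rw [deriv_deriv_rpow]
      ring

end Laplacian

section MaximumPrinciple

variable {E : Type*} [NormedAddCommGroup E] [InnerProductSpace ℝ E] {u v : E → ℝ} {U : Set E}
  {x : E} {M : ℝ}

theorem fderiv_fderiv_nonpos_of_isLocalMax (hu : ContDiffAt ℝ 2 u x) (hmax : IsLocalMax u x)
    (w : E) : fderiv ℝ (fderiv ℝ u) x w w ≤ 0 := by
  let line : ℝ → E := fun t ↦ x + t • w
  have line_zero : line 0 = x := by simp [line]
  have tendsto_line : Tendsto line (𝓝 0) (𝓝 x) :=
    (by fun_prop : Continuous line).tendsto' 0 x line_zero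
  have hasDerivAt_line (t : ℝ) : HasDerivAt line w t := by
    simpa [line] using ((hasDerivAt_id t).smul_const w).const_add x
  have deriv_nhds : deriv (u ∘ line) =ᶠ[𝓝 0] fun t ↦ fderiv ℝ u (line t) w := by
    filter_upwards [tendsto_line.eventually (hu.eventually (by simp))] with t ht
    exact ((ht.differentiableAt two_ne_zero).hasFDerivAt.comp_hasDerivAt t
      (hasDerivAt_line t)).deriv
  have deriv_deriv : deriv (deriv (u ∘ line)) 0 = fderiv ℝ (fderiv ℝ u) x w w := by
    have hu'' := line_zero ▸ hasFDerivAt_fderiv hu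
    rw [deriv_nhds.deriv_eq]
    simpa [line_zero] using
      ((hu''.comp_hasDerivAt 0 (hasDerivAt_line 0)).clm_apply (hasDerivAt_const 0 w)).deriv
  have hmax' : IsLocalMax (u ∘ line) 0 :=
    IsMaxFilter.comp_tendsto (line_zero.symm ▸ hmax) (line_zero.symm ▸ tendsto_line)
  by_contra! hpos
  have hmin' : IsLocalMin (u ∘ line) 0 :=
    isLocalMin_of_deriv_deriv_pos (deriv_deriv ▸ hpos) hmax'.deriv_eq_zero
      (hu.continuousAt.comp_of_eq (hasDerivAt_line 0).continuousAt line_zero)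
  have eventually_const : u ∘ line =ᶠ[𝓝 0] fun _ ↦ (u ∘ line) 0 := by
    filter_upwards [hmax', hmin'] with t h₁ h₂ using le_antisymm h₁ h₂
  have : deriv (deriv (u ∘ line)) 0 = 0 := by
    rw [eventually_const.deriv.deriv_eq]
    simp
  exact hpos.ne' (deriv_deriv ▸ this)

variable [FiniteDimensional ℝ E]

theorem laplacian_nonpos_of_isLocalMax (hu : ContDiffAt ℝ 2 u x) (hmax : IsLocalMax u x) :
    Δ u x ≤ 0 := by
  rw [laplacian_eq_sum_fderiv_fderiv u (stdOrthonormalBasis ℝ E)]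
  exact Finset.sum_nonpos fun i _ ↦ fderiv_fderiv_nonpos_of_isLocalMax hu hmax _

theorem le_of_laplacian_pos_of_le_frontier (hU : IsOpen U) (hb : Bornology.IsBounded U)
    (hc : ContinuousOn u (closure U)) (hu : ∀ x ∈ U, ContDiffAt ℝ 2 u x) (hΔ : ∀ x ∈ U, 0 < Δ u x)
    (hM : ∀ x ∈ frontier U, u x ≤ M) (hx : x ∈ closure U) : u x ≤ M := by
  obtain ⟨z, hz, hmax⟩ := hb.isCompact_closure.exists_isMaxOn ⟨x, hx⟩ hc
  have hzU : z ∉ U := fun hzU ↦ (hΔ z hzU).not_ge <| laplacian_nonpos_of_isLocalMax (hu z hzU) <|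
    (hmax.on_subset subset_closure).isLocalMax (hU.mem_nhds hzU)
  exact (hmax hx).trans (hM z (hU.frontier_eq ▸ ⟨hz, hzU⟩))

variable [Nontrivial E]

theorem le_of_laplacian_nonneg_of_le_frontier (hU : IsOpen U) (hb : Bornology.IsBounded U)
    (hc : ContinuousOn u (closure U)) (hu : ∀ x ∈ U, ContDiffAt ℝ 2 u x) (hΔ : ∀ x ∈ U, 0 ≤ Δ u x)
    (hM : ∀ x ∈ frontier U, u x ≤ M) (hx : x ∈ closure U) : u x ≤ M := by
  obtain ⟨C, hC⟩ := hb.closure.exists_norm_le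
  let q : E → ℝ := fun x ↦ ‖x - 0‖ ^ 2
  have q_le {y : E} (hy : y ∈ closure U) : q y ≤ C ^ 2 := by
    simpa [q] using pow_le_pow_left₀ (norm_nonneg y) (hC y hy) 2
  have contDiff_q (ε : ℝ) : ContDiff ℝ 2 (ε • q) := contDiff_const.smul (contDiff_norm_sub_sq 0)
  have perturbed_le {ε : ℝ} (hε : 0 < ε) : (u + ε • q) x ≤ M + ε * C ^ 2 := by
    refine le_of_laplacian_pos_of_le_frontier hU hb (hc.add (contDiff_q ε).continuous.continuousOn)
      (fun y hy ↦ (hu y hy).add (contDiff_q ε).contDiffAt) (fun y hy ↦ ?_) (fun y hy ↦ ?_) hx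
    · rw [(hu y hy).laplacian_add (contDiff_q ε).contDiffAt,
        laplacian_smul ε (contDiff_norm_sub_sq 0).contDiffAt, laplacian_norm_sub_sq]
      have : 0 < finrank ℝ E := finrank_pos
      exact add_pos_of_nonneg_of_pos (hΔ y hy) (smul_pos hε (by positivity))
    · exact add_le_add (hM y hy) (mul_le_mul_of_nonneg_left (q_le hy.1) hε.le)
  have tendsto_bound : Tendsto (fun ε ↦ M + ε * C ^ 2) (𝓝[>] 0) (𝓝 M) :=
    ((by fun_prop : Continuous fun ε ↦ M + ε * C ^ 2).tendsto' 0 M (by simp)).mono_left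
      nhdsWithin_le_nhds
  refine ge_of_tendsto tendsto_bound (eventually_mem_nhdsWithin.mono fun ε hε ↦ ?_)
  calc u x ≤ u x + ε * q x := le_add_of_nonneg_right (mul_nonneg (le_of_lt hε) (sq_nonneg _))
    _ ≤ M + ε * C ^ 2 := perturbed_le hε

/-- The maximum principle on a possibly unbounded open set: the point at infinity counts as a
boundary point. -/
theorem le_of_laplacian_nonneg_of_le_frontier_of_cobounded (hU : IsOpen U)
    (hc : ContinuousOn u (closure U)) (hu : ∀ x ∈ U, ContDiffAt ℝ 2 u x) (hΔ : ∀ x ∈ U, 0 ≤ Δ u x)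
    (hM : ∀ x ∈ frontier U, u x ≤ M)
    (h_infty : ∀ ε > 0, ∀ᶠ x in Bornology.cobounded E ⊓ 𝓟 U, u x ≤ M + ε)
    (hx : x ∈ closure U) : u x ≤ M := by
  refine le_of_forall_pos_le_add fun ε hε ↦ ?_
  obtain ⟨ρ, -, hρ⟩ := (hasBasis_cobounded_norm.inf_principal U).eventually_iff.1 (h_infty ε hε)
  let B : Set E := ball 0 (max ρ (‖x‖ + 1))
  have hxB : x ∈ B := by simp [B]
  have closure_subset : closure (U ∩ B) ⊆ closure U := closure_mono inter_subset_left
  refine le_of_laplacian_nonneg_of_le_frontier (hU.inter isOpen_ball)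
    (isBounded_ball.subset inter_subset_right) (hc.mono closure_subset) (fun y hy ↦ hu y hy.1)
    (fun y hy ↦ hΔ y hy.1) (fun y hy ↦ ?_) (isOpen_ball.closure_inter ⟨hx, hxB⟩)
  by_cases hyU : y ∈ U
  · have hyB : y ∉ B := fun hyB ↦ hy.2 ((hU.inter isOpen_ball).interior_eq.symm ▸ ⟨hyU, hyB⟩)
    exact hρ ⟨(le_max_left _ _).trans (not_lt.1 (mem_ball_zero_iff.not.1 hyB)), hyU⟩
  · have : y ∈ frontier U := hU.frontier_eq ▸ ⟨closure_subset hy.1, hyU⟩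
    linarith [hM y this]

theorem eqOn_closure_of_harmonicContOnCl (hU : IsOpen U) (hu : HarmonicContOnCl u U)
    (hv : HarmonicContOnCl v U) (huv : EqOn u v (frontier U))
    (h_infty : Tendsto (u - v) (Bornology.cobounded E ⊓ 𝓟 U) (𝓝 0)) : EqOn u v (closure U) := by
  have sub_le_zero {u v : E → ℝ} (hu : HarmonicContOnCl u U) (hv : HarmonicContOnCl v U)
      (huv : EqOn u v (frontier U))
      (h_infty : Tendsto (u - v) (Bornology.cobounded E ⊓ 𝓟 U) (𝓝 0)) {x : E}
      (hx : x ∈ closure U) : (u - v) x ≤ 0 := by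
    have h := hu.sub hv
    refine le_of_laplacian_nonneg_of_le_frontier_of_cobounded hU h.continuousOn
      (fun y hy ↦ (h.harmonicOnNhd y hy).1) (fun y hy ↦ (h.harmonicOnNhd y hy).2.self_of_nhds.ge)
      (fun y hy ↦ (sub_eq_zero.2 (huv hy)).le) (fun ε hε ↦ ?_) hx
    filter_upwards [h_infty.eventually_le_const hε] with y hy
    simpa using hy
  have h_infty' : Tendsto (v - u) (Bornology.cobounded E ⊓ 𝓟 U) (𝓝 0) := by
    simpa [Pi.sub_def] using h_infty.neg
  exact fun x hx ↦ (sub_nonpos.1 (sub_le_zero hu hv huv h_infty hx)).antisymm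
    (sub_nonpos.1 (sub_le_zero hv hu huv.symm h_infty' hx))

end MaximumPrinciple

section ParametricIntegral

theorem exists_eventually_forall_norm_le {X Y G : Type*} [TopologicalSpace X]
    [LocallyCompactSpace X] [TopologicalSpace Y] [SeminormedAddCommGroup G] {U : Set X} {S : Set Y}
    {K : X → Y → G} (hU : IsOpen U) (hS : IsCompact S) (hK : ContinuousOn (uncurry K) (U ×ˢ S))
    {x : X} (hx : x ∈ U) : ∃ C, ∀ᶠ y in 𝓝 x, ∀ η ∈ S, ‖K y η‖ ≤ C := by
  obtain ⟨N, hN, hNU, hNc⟩ := local_compact_nhds (hU.mem_nhds hx)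
  obtain ⟨C, hC⟩ := (hNc.prod hS).exists_bound_of_continuousOn (hK.mono (prod_mono_left hNU))
  exact ⟨C, eventually_of_mem hN fun y hy η hη ↦ hC (y, η) ⟨hy, hη⟩⟩

theorem contDiffAt_uncurry_fderiv {𝕜 H P G : Type*} [NontriviallyNormedField 𝕜]
    [NormedAddCommGroup H] [NormedSpace 𝕜 H] [NormedAddCommGroup P] [NormedSpace 𝕜 P]
    [NormedAddCommGroup G] [NormedSpace 𝕜 G] {K : H → P → G} {m n : WithTop ℕ∞} (hmn : m + 1 ≤ n)
    {p : H × P} (hK : ContDiffAt 𝕜 n (uncurry K) p) :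
    ContDiffAt 𝕜 m (uncurry fun x η ↦ fderiv 𝕜 (K · η) x) p :=
  ContDiffAt.fderiv (f := fun (q : H × P) y ↦ K y q.2)
    (hK.comp (p, p.1) (contDiffAt_snd.prodMk (contDiff_snd.comp contDiff_fst).contDiffAt))
    contDiffAt_fst hmn

variable {H P G : Type*} [NormedAddCommGroup H] [LocallyCompactSpace H]
  [NormedAddCommGroup P] [MeasurableSpace P] [OpensMeasurableSpace P] [SecondCountableTopology P]
  [NormedAddCommGroup G] [NormedSpace ℝ G]
  {U : Set H} {S : Set P} {K : H → P → G} {μ : Measure P} {f : P → ℝ}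

theorem continuousOn_setIntegral_smul (hU : IsOpen U) (hS : IsCompact S)
    (hf : IntegrableOn f S μ) (hK : ContinuousOn (uncurry K) (U ×ˢ S)) :
    ContinuousOn (fun x ↦ ∫ η in S, f η • K x η ∂μ) U := by
  refine continuousOn_of_forall_continuousAt fun x hx ↦ ?_
  obtain ⟨C, hC⟩ := exists_eventually_forall_norm_le hU hS hK hx
  refine continuousAt_of_dominated (bound := fun η ↦ ‖f η‖ * C) ?_ ?_ (hf.norm.mul_const C) ?_
  · filter_upwards [hU.mem_nhds hx] with y hy
    exact (hf.smul_continuousOn (hK.uncurry_left y hy) hS).aestronglyMeasurable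
  · filter_upwards [hC] with y hy
    refine ae_restrict_of_forall_mem hS.measurableSet fun η hη ↦ ?_
    grw [norm_smul, hy η hη]
  · refine ae_restrict_of_forall_mem hS.measurableSet fun η hη ↦ ?_
    exact ((hK.uncurry_right η hη).continuousAt (hU.mem_nhds hx)).const_smul (f η)

variable [NormedSpace ℝ H] [NormedSpace ℝ P]

theorem hasFDerivAt_setIntegral_smul (hU : IsOpen U) (hS : IsCompact S)
    (hf : IntegrableOn f S μ) (hK : ∀ p ∈ U ×ˢ S, ContDiffAt ℝ 1 (uncurry K) p)
    {x : H} (hx : x ∈ U) :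
    HasFDerivAt (fun x ↦ ∫ η in S, f η • K x η ∂μ) (∫ η in S, f η • fderiv ℝ (K · η) x ∂μ) x := by
  have hK' : ContinuousOn (uncurry fun x η ↦ fderiv ℝ (K · η) x) (U ×ˢ S) := fun p hp ↦
    (contDiffAt_uncurry_fderiv (m := 0) le_rfl (hK p hp)).continuousAt.continuousWithinAt
  obtain ⟨C, hC⟩ := exists_eventually_forall_norm_le hU hS hK' hx
  have integrable (y : H) (hy : y ∈ U) : Integrable (fun η ↦ f η • K y η) (μ.restrict S) :=
    have hKc : ContinuousOn (uncurry K) (U ×ˢ S) :=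
      fun p hp ↦ (hK p hp).continuousAt.continuousWithinAt
    hf.smul_continuousOn (hKc.uncurry_left y hy) hS
  refine hasFDerivAt_integral_of_dominated_of_fderiv_le (bound := fun η ↦ ‖f η‖ * C)
    (F' := fun x η ↦ f η • fderiv ℝ (K · η) x) (inter_mem (hU.mem_nhds hx) hC) ?_
    (integrable x hx) (hf.smul_continuousOn (hK'.uncurry_left x hx) hS).aestronglyMeasurable
    ?_ (hf.norm.mul_const C) ?_
  · filter_upwards [hU.mem_nhds hx] with y hy using (integrable y hy).aestronglyMeasurable
  · refine ae_restrict_of_forall_mem hS.measurableSet fun η hη y hy ↦ ?_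
    grw [norm_smul, hy.2 η hη]
  · refine ae_restrict_of_forall_mem hS.measurableSet fun η hη y hy ↦ ?_
    have hKy : DifferentiableAt ℝ (uncurry K) (y, η) :=
      (hK (y, η) ⟨hy.1, hη⟩).differentiableAt one_ne_zero
    exact (hKy.comp (f := fun z ↦ (z, η)) y
      (differentiableAt_id.prodMk (differentiableAt_const η))).hasFDerivAt.const_smul (f η)

theorem contDiffOn_one_setIntegral_smul (hU : IsOpen U) (hS : IsCompact S)
    (hf : IntegrableOn f S μ) (hK : ∀ p ∈ U ×ˢ S, ContDiffAt ℝ 1 (uncurry K) p) :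
    ContDiffOn ℝ 1 (fun x ↦ ∫ η in S, f η • K x η ∂μ) U := by
  have hasFDerivAt {x : H} (hx : x ∈ U) := hasFDerivAt_setIntegral_smul hU hS hf hK hx
  rw [← zero_add 1, contDiffOn_succ_iff_fderiv_of_isOpen hU]
  refine ⟨fun x hx ↦ (hasFDerivAt hx).differentiableAt.differentiableWithinAt, by simp,
    contDiffOn_zero.2 <| (continuousOn_setIntegral_smul hU hS hf fun p hp ↦ ?_).congr
      fun x hx ↦ (hasFDerivAt hx).fderiv⟩
  exact (contDiffAt_uncurry_fderiv (m := 0) le_rfl (hK p hp)).continuousAt.continuousWithinAt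

theorem contDiffOn_two_setIntegral_smul (hU : IsOpen U) (hS : IsCompact S)
    (hf : IntegrableOn f S μ) (hK : ∀ p ∈ U ×ˢ S, ContDiffAt ℝ 2 (uncurry K) p) :
    ContDiffOn ℝ 2 (fun x ↦ ∫ η in S, f η • K x η ∂μ) U := by
  have hasFDerivAt {x : H} (hx : x ∈ U) :=
    hasFDerivAt_setIntegral_smul hU hS hf (fun p hp ↦ (hK p hp).of_le one_le_two) hx
  rw [← one_add_one_eq_two, contDiffOn_succ_iff_fderiv_of_isOpen hU]
  refine ⟨fun x hx ↦ (hasFDerivAt hx).differentiableAt.differentiableWithinAt, by simp,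
    (contDiffOn_one_setIntegral_smul hU hS hf fun p hp ↦ ?_).congr fun x hx ↦
      (hasFDerivAt hx).fderiv⟩
  exact contDiffAt_uncurry_fderiv le_rfl (hK p hp)

theorem fderiv_fderiv_setIntegral_smul (hU : IsOpen U) (hS : IsCompact S)
    (hf : IntegrableOn f S μ) (hK : ∀ p ∈ U ×ˢ S, ContDiffAt ℝ 2 (uncurry K) p)
    {x : H} (hx : x ∈ U) :
    fderiv ℝ (fderiv ℝ fun x ↦ ∫ η in S, f η • K x η ∂μ) x =
      ∫ η in S, f η • fderiv ℝ (fderiv ℝ (K · η)) x ∂μ := by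
  have fderiv_nhds : (fderiv ℝ fun x ↦ ∫ η in S, f η • K x η ∂μ) =ᶠ[𝓝 x]
      fun x ↦ ∫ η in S, f η • fderiv ℝ (K · η) x ∂μ := by
    filter_upwards [hU.mem_nhds hx] with y hy
    exact (hasFDerivAt_setIntegral_smul hU hS hf (fun p hp ↦ (hK p hp).of_le one_le_two) hy).fderiv
  rw [fderiv_nhds.fderiv_eq]
  exact (hasFDerivAt_setIntegral_smul hU hS hf
    (fun p hp ↦ contDiffAt_uncurry_fderiv le_rfl (hK p hp)) hx).fderiv

set_option maxSynthPendingDepth 3 in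
omit [LocallyCompactSpace H] in
theorem integrableOn_smul_fderiv_fderiv (hS : IsCompact S) (hf : IntegrableOn f S μ) {x : H}
    (hK : ∀ η ∈ S, ContDiffAt ℝ 2 (uncurry K) (x, η)) :
    IntegrableOn (fun η ↦ f η • fderiv ℝ (fderiv ℝ (K · η)) x) S μ := by
  refine hf.smul_continuousOn (fun η hη ↦ ?_) hS
  have h1 := contDiffAt_uncurry_fderiv (m := 1) le_rfl (hK η hη)
  have h0 := contDiffAt_uncurry_fderiv (m := 0) le_rfl h1
  exact (h0.continuousAt.comp (f := fun ζ ↦ (x, ζ)) (by fun_prop)).continuousWithinAt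

end ParametricIntegral

section HarmonicIntegral

variable {E P : Type*} [NormedAddCommGroup E] [InnerProductSpace ℝ E] [FiniteDimensional ℝ E]
  [NormedAddCommGroup P] [NormedSpace ℝ P] [MeasurableSpace P] [OpensMeasurableSpace P]
  [SecondCountableTopology P] {U : Set E} {S : Set P} {K : E → P → ℝ} {μ : Measure P} {f : P → ℝ}

set_option maxSynthPendingDepth 3 in
theorem laplacian_setIntegral_mul (hU : IsOpen U) (hS : IsCompact S)
    (hf : IntegrableOn f S μ) (hK : ∀ p ∈ U ×ˢ S, ContDiffAt ℝ 2 (uncurry K) p)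
    {x : E} (hx : x ∈ U) :
    Δ (fun x ↦ ∫ η in S, f η * K x η ∂μ) x = ∫ η in S, f η * Δ (K · η) x ∂μ := by
  let v := stdOrthonormalBasis ℝ E
  have integrable : IntegrableOn (fun η ↦ f η • fderiv ℝ (fderiv ℝ (K · η)) x) S μ :=
    integrableOn_smul_fderiv_fderiv hS hf fun η hη ↦ hK (x, η) ⟨hx, hη⟩
  have integrable_apply (i) :
      IntegrableOn (fun η ↦ f η * fderiv ℝ (fderiv ℝ (K · η)) x (v i) (v i)) S μ :=
    (integrable.apply_continuousLinearMap (v i)).apply_continuousLinearMap (v i)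
  simp only [← smul_eq_mul, laplacian_eq_sum_fderiv_fderiv _ v,
    fderiv_fderiv_setIntegral_smul hU hS hf hK hx]
  simp only [smul_eq_mul, Finset.mul_sum]
  rw [integral_finsetSum _ fun i _ ↦ integrable_apply i]
  refine Finset.sum_congr rfl fun i _ ↦ ?_
  rw [ContinuousLinearMap.integral_apply integrable,
    ContinuousLinearMap.integral_apply (integrable.apply_continuousLinearMap (v i))]
  rfl

theorem harmonicOnNhd_setIntegral_mul (hU : IsOpen U) (hS : IsCompact S)
    (hf : IntegrableOn f S μ) (hK : ∀ p ∈ U ×ˢ S, ContDiffAt ℝ 2 (uncurry K) p)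
    (harm : ∀ η ∈ S, HarmonicOnNhd (K · η) U) :
    HarmonicOnNhd (fun x ↦ ∫ η in S, f η * K x η ∂μ) U := by
  refine fun x hx ↦
    ⟨(contDiffOn_two_setIntegral_smul hU hS hf hK).contDiffAt (hU.mem_nhds hx), ?_⟩
  filter_upwards [hU.mem_nhds hx] with y hy
  rw [laplacian_setIntegral_mul hU hS hf hK hy]
  refine setIntegral_eq_zero_of_forall_eq_zero fun η hη ↦ ?_
  rw [(harm η hη y hy).2.eq_of_nhds, Pi.zero_apply, mul_zero]

end HarmonicIntegral

section Kernel

variable {E : Type*} [NormedAddCommGroup E] [InnerProductSpace ℝ E]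

/-- The Poisson kernel of the exterior of the ball of radius `‖η‖`, at the boundary point `η` and
without its normalizing constant. The value at `η = 0` makes sense too: it is the fundamental
solution `‖x‖ ^ (2 - finrank ℝ E)`. -/
noncomputable def extPoissonKernel (x η : E) : ℝ :=
  (‖x‖ ^ 2 - ‖η‖ ^ 2) / ‖x - η‖ ^ finrank ℝ E

theorem extPoissonKernel_nonneg {x η : E} (h : ‖η‖ ≤ ‖x‖) : 0 ≤ extPoissonKernel x η :=
  div_nonneg (sub_nonneg.2 (by gcongr)) (by positivity)

theorem extPoissonKernel_zero_right (x : E) :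
    extPoissonKernel x 0 = ‖x‖ ^ 2 / ‖x‖ ^ finrank ℝ E := by
  simp [extPoissonKernel]

theorem extPoissonKernel_zero_right_pos {x : E} (hx : x ≠ 0) : 0 < extPoissonKernel x 0 := by
  rw [extPoissonKernel_zero_right]
  positivity

theorem extPoissonKernel_map (L : E ≃ₗᵢ[ℝ] E) (x η : E) :
    extPoissonKernel (L x) (L η) = extPoissonKernel x η := by
  simp only [extPoissonKernel, ← map_sub, L.norm_map]

theorem contDiffAt_uncurry_extPoissonKernel {n : WithTop ℕ∞} {p : E × E} (hp : p.1 ≠ p.2) :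
    ContDiffAt ℝ n (uncurry extPoissonKernel) p := by
  have norm_sub : ContDiffAt ℝ n (fun q : E × E ↦ ‖q.1 - q.2‖) p :=
    (contDiffAt_fst.sub contDiffAt_snd).norm ℝ (sub_ne_zero.2 hp)
  exact ((contDiffAt_fst.norm_sq ℝ).sub (contDiffAt_snd.norm_sq ℝ)).div (norm_sub.pow _)
    (pow_ne_zero _ (norm_ne_zero_iff.2 (sub_ne_zero.2 hp)))

theorem continuousAt_extPoissonKernel {x η : E} (h : x ≠ η) :
    ContinuousAt (extPoissonKernel · η) x :=
  (contDiffAt_uncurry_extPoissonKernel (n := 0) (p := (x, η)) h).continuousAt.comp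
    (f := fun y ↦ (y, η)) (by fun_prop)

theorem continuousOn_extPoissonKernel_sphere {x : E} {R : ℝ} (hx : R < ‖x‖) :
    ContinuousOn (extPoissonKernel x) (sphere 0 R) := by
  intro η hη
  have hxη : x ≠ η := by
    rintro rfl
    exact hx.ne' (mem_sphere_zero_iff_norm.1 hη)
  exact ((contDiffAt_uncurry_extPoissonKernel (n := 0) (p := (x, η)) hxη).continuousAt.comp
    (f := fun ζ ↦ (x, ζ)) (by fun_prop)).continuousWithinAt

theorem extPoissonKernel_eq_mul_rpow (x η : E) :
    extPoissonKernel x η = (‖x‖ ^ 2 - ‖η‖ ^ 2) * (‖x - η‖ ^ 2) ^ (-(finrank ℝ E : ℝ) / 2) := by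
  rw [extPoissonKernel, Real.rpow_div_two_eq_sqrt _ (sq_nonneg _), Real.sqrt_sq (norm_nonneg _),
    Real.rpow_neg (norm_nonneg _), Real.rpow_natCast, div_eq_mul_inv]

theorem tendsto_extPoissonKernel_zero_cobounded (hE : 3 ≤ finrank ℝ E) :
    Tendsto (fun x : E ↦ extPoissonKernel x 0) (Bornology.cobounded E) (𝓝 0) := by
  obtain ⟨k, hk⟩ := Nat.exists_eq_add_of_le hE
  have kernel_eq (x : E) : (‖x‖ ^ (k + 1))⁻¹ = extPoissonKernel x 0 := by
    rcases eq_or_ne x 0 with rfl | hx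
    · simp [extPoissonKernel]
    · rw [extPoissonKernel_zero_right, hk]
      field_simp
      ring
  refine Tendsto.congr kernel_eq (tendsto_inv_atTop_zero.comp ?_)
  exact (tendsto_pow_atTop k.succ_ne_zero).comp tendsto_norm_cobounded_atTop

theorem extPoissonKernel_div_extPoissonKernel_zero {x : E} (hx : x ≠ 0) (η : E) :
    extPoissonKernel x η / extPoissonKernel x 0 =
      (1 - (‖η‖ / ‖x‖) ^ 2) / (‖x - η‖ / ‖x‖) ^ finrank ℝ E := by
  rw [extPoissonKernel_zero_right, extPoissonKernel, div_pow, div_pow]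
  field_simp

theorem tendsto_extPoissonKernel_div_cobounded (η : E) :
    Tendsto (fun x ↦ extPoissonKernel x η / extPoissonKernel x 0) (Bornology.cobounded E)
      (𝓝 1) := by
  have h_div : Tendsto (fun x : E ↦ ‖η‖ / ‖x‖) (Bornology.cobounded E) (𝓝 0) :=
    tendsto_norm_cobounded_atTop.const_div_atTop ‖η‖
  have h_sub_div : Tendsto (fun x : E ↦ ‖x - η‖ / ‖x‖) (Bornology.cobounded E) (𝓝 1) := by
    refine tendsto_iff_norm_sub_tendsto_zero.2 <| squeeze_zero' (.of_forall fun _ ↦ norm_nonneg _)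
      ?_ h_div
    filter_upwards [Bornology.eventually_ne_cobounded (0 : E)] with x hx
    have hx' : 0 < ‖x‖ := norm_pos_iff.2 hx
    rw [div_sub_one hx'.ne', norm_div, norm_norm]
    gcongr
    simpa using abs_norm_sub_norm_le (x - η) x
  have h_lim := ((h_div.pow 2).const_sub 1).div (h_sub_div.pow (finrank ℝ E)) (by simp)
  simp only [ne_eq, OfNat.ofNat_ne_zero, not_false_eq_true, zero_pow, sub_zero, one_pow,
    div_one] at h_lim
  refine h_lim.congr' ?_
  filter_upwards [Bornology.eventually_ne_cobounded (0 : E)] with x hx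
  exact (extPoissonKernel_div_extPoissonKernel_zero hx η).symm

theorem abs_extPoissonKernel_div_le {x η : E} (hx : x ≠ 0) (h : 2 * ‖η‖ ≤ ‖x‖) :
    |extPoissonKernel x η / extPoissonKernel x 0| ≤ 2 ^ finrank ℝ E := by
  have hx' : 0 < ‖x‖ := norm_pos_iff.2 hx
  have h_le : ‖η‖ ≤ ‖x‖ := by linarith [norm_nonneg η]
  have half_le : 2⁻¹ ≤ ‖x - η‖ / ‖x‖ := by
    rw [le_div_iff₀ hx']
    linarith [norm_sub_norm_le x η]
  rw [abs_of_nonneg (div_nonneg (extPoissonKernel_nonneg h_le)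
      (extPoissonKernel_zero_right_pos hx).le), extPoissonKernel_div_extPoissonKernel_zero hx η]
  calc (1 - (‖η‖ / ‖x‖) ^ 2) / (‖x - η‖ / ‖x‖) ^ finrank ℝ E
      ≤ 1 / 2⁻¹ ^ finrank ℝ E := by
        gcongr
        exact sub_le_self 1 (by positivity)
    _ = 2 ^ finrank ℝ E := by simp

theorem laplacian_extPoissonKernel [FiniteDimensional ℝ E] {x η : E} (h : x ≠ η) :
    Δ (extPoissonKernel · η) x = 0 := by
  let n : ℝ := finrank ℝ E
  have norm_sq_pos : 0 < ‖x - η‖ ^ 2 := pow_pos (norm_sub_pos_iff.2 h) 2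
  let a : E → ℝ := fun y ↦ ‖y - 0‖ ^ 2 - ‖η‖ ^ 2
  let q : E → ℝ := fun y ↦ (‖y - η‖ ^ 2) ^ (-n / 2)
  have kernel_eq : (extPoissonKernel · η) = a * q := by
    funext y
    simp only [Pi.mul_apply, a, q, n, sub_zero, extPoissonKernel_eq_mul_rpow y η]
  have contDiffAt_a : ContDiffAt ℝ 2 a x := ((contDiff_norm_sub_sq 0).sub contDiff_const).contDiffAt
  have contDiffAt_q : ContDiffAt ℝ 2 q x :=
    (contDiff_norm_sub_sq η).contDiffAt.rpow_const_of_ne norm_sq_pos.ne'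
  have laplacian_a : Δ a x = 2 * n :=
    ((contDiff_norm_sub_sq 0).contDiffAt.laplacian_sub contDiffAt_const).trans
      (by rw [laplacian_norm_sub_sq, laplacian_const, Pi.zero_apply, sub_zero])
  have gradient_a : ∇ a x = (2 : ℝ) • (x - 0) :=
    (hasGradientAt_iff_hasFDerivAt.2
      ((hasGradientAt_norm_sub_sq 0 x).hasFDerivAt.sub_const _)).gradient
  have q_apply : q x = ‖x - η‖ ^ 2 * (‖x - η‖ ^ 2) ^ (-n / 2 - 1) := by
    rw [Real.rpow_sub_one norm_sq_pos.ne', mul_div_cancel₀ _ norm_sq_pos.ne']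
  have norm_eta_sq : ‖η‖ ^ 2 = ‖x‖ ^ 2 - 2 * ⟪x, x - η⟫_ℝ + ‖x - η‖ ^ 2 := by
    simpa using norm_sub_sq_real x (x - η)
  rw [kernel_eq, laplacian_mul contDiffAt_a contDiffAt_q, laplacian_a, gradient_a,
    laplacian_norm_sub_sq_rpow h, gradient_norm_sub_sq_rpow h, q_apply]
  simp only [a, sub_zero, real_inner_smul_left, real_inner_smul_right, norm_eta_sq]
  ring

theorem harmonicAt_extPoissonKernel [FiniteDimensional ℝ E] {x η : E} (h : x ≠ η) :
    HarmonicAt (extPoissonKernel · η) x := by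
  refine ⟨(contDiffAt_uncurry_extPoissonKernel (p := (x, η)) h).comp (f := fun y ↦ (y, η)) x
    (by fun_prop), ?_⟩
  filter_upwards [isOpen_ne.mem_nhds h] with y hy using laplacian_extPoissonKernel hy

end Kernel

section Peak

/-- A version of `tendsto_setIntegral_peak_smul_of_integrableOn_of_tendsto` for kernels of total
mass `c` instead of `1`. -/
theorem tendsto_setIntegral_mul_of_peak {X ι : Type*} [TopologicalSpace X] [MeasurableSpace X]
    [BorelSpace X] [T2Space X] {μ : Measure X} {s : Set X} {x₀ : X} {g : X → ℝ} {φ : ι → X → ℝ}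
    {l : Filter ι} {c : ℝ} (hs : IsCompact s) (hμs : μ s ≠ ⊤) (hg : ContinuousOn g s)
    (hx₀ : x₀ ∈ s) (hc : 0 < c) (φ_nonneg : ∀ᶠ i in l, ∀ x ∈ s, 0 ≤ φ i x)
    (φ_off_peak : ∀ V, IsOpen V → x₀ ∈ V → TendstoUniformlyOn φ 0 l (s \ V))
    (φ_mass : Tendsto (fun i ↦ ∫ x in s, φ i x ∂μ) l (𝓝 c))
    (φ_meas : ∀ᶠ i in l, AEStronglyMeasurable (φ i) (μ.restrict s)) :
    Tendsto (fun i ↦ ∫ x in s, g x * φ i x ∂μ) l (𝓝 (g x₀ * c)) := by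
  have peak : Tendsto (fun i ↦ ∫ x in s, (c⁻¹ * φ i x) • g x ∂μ) l (𝓝 (g x₀)) := by
    refine tendsto_setIntegral_peak_smul_of_integrableOn_of_tendsto hs.measurableSet
      hs.measurableSet subset_rfl self_mem_nhdsWithin hμs ?_ (fun V hV hx₀V ↦ ?_) ?_ ?_
      (hg.integrableOn_of_subset_isCompact hs hs.measurableSet subset_rfl hμs) (hg x₀ hx₀)
    · filter_upwards [φ_nonneg] with i hi x hx using
        mul_nonneg (inv_nonneg.2 hc.le) (hi x hx)
    · simpa [Pi.zero_def, comp_def] using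
        (uniformContinuous_const_smul c⁻¹).comp_tendstoUniformlyOn (φ_off_peak V hV hx₀V)
    · simpa [integral_const_mul, inv_mul_cancel₀ hc.ne'] using φ_mass.const_mul c⁻¹
    · filter_upwards [φ_meas] with i hi using hi.const_mul c⁻¹
  refine (peak.mul_const c).congr fun i ↦ ?_
  rw [← integral_mul_const]
  congr 1 with x
  rw [smul_eq_mul]
  field_simp

end Peak

section Exterior

variable {E : Type*} [NormedAddCommGroup E] {R : ℝ}

theorem setOf_lt_norm_eq_compl_closedBall : {x : E | R < ‖x‖} = (closedBall 0 R)ᶜ := by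
  ext
  simp

theorem isOpen_setOf_lt_norm : IsOpen {x : E | R < ‖x‖} :=
  isOpen_lt continuous_const continuous_norm

variable [NormedSpace ℝ E]

theorem closure_setOf_lt_norm (hR : R ≠ 0) : closure {x : E | R < ‖x‖} = {x | R ≤ ‖x‖} := by
  rw [setOf_lt_norm_eq_compl_closedBall, closure_compl, interior_closedBall _ hR]
  ext
  simp

theorem frontier_setOf_lt_norm (hR : R ≠ 0) : frontier {x : E | R < ‖x‖} = sphere 0 R := by
  rw [setOf_lt_norm_eq_compl_closedBall, frontier_compl, frontier_closedBall _ hR]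

end Exterior

section ExteriorHarmonic

variable {E : Type*} [NormedAddCommGroup E] [InnerProductSpace ℝ E] [FiniteDimensional ℝ E]
  {u v : E → ℝ} {R : ℝ}

theorem eqOn_exterior_of_harmonicContOnCl [Nontrivial E] (hR : R ≠ 0)
    (hu : HarmonicContOnCl u {x | R < ‖x‖}) (hv : HarmonicContOnCl v {x | R < ‖x‖})
    (huv : EqOn u v (sphere 0 R)) (hu_infty : Tendsto u (Bornology.cobounded E) (𝓝 0))
    (hv_infty : Tendsto v (Bornology.cobounded E) (𝓝 0)) : EqOn u v {x | R ≤ ‖x‖} := by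
  rw [← frontier_setOf_lt_norm hR] at huv
  rw [← closure_setOf_lt_norm hR]
  exact eqOn_closure_of_harmonicContOnCl isOpen_setOf_lt_norm hu hv huv
    (by simpa [Pi.sub_def] using (hu_infty.sub hv_infty).mono_left inf_le_left)

theorem harmonicOnNhd_const_mul_extPoissonKernel_zero (c : ℝ) (hR : 0 ≤ R) :
    HarmonicOnNhd (fun x : E ↦ c * extPoissonKernel x 0) {x | R < ‖x‖} := fun _ hx ↦
  (harmonicAt_extPoissonKernel (norm_pos_iff.1 (hR.trans_lt hx))).const_smul

omit [FiniteDimensional ℝ E] in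
theorem tendsto_zero_of_tendsto_div_extPoissonKernel_zero (hE : 3 ≤ finrank ℝ E) {c : ℝ}
    (h : Tendsto (fun x ↦ u x / extPoissonKernel x 0) (Bornology.cobounded E) (𝓝 c)) :
    Tendsto u (Bornology.cobounded E) (𝓝 0) := by
  have h_mul := h.mul (tendsto_extPoissonKernel_zero_cobounded hE)
  rw [mul_zero] at h_mul
  refine h_mul.congr' ?_
  filter_upwards [Bornology.eventually_ne_cobounded 0] with x hx
  exact div_mul_cancel₀ _ (extPoissonKernel_zero_right_pos hx).ne'

theorem eq_const_mul_extPoissonKernel_zero_of_radial (hE : 3 ≤ finrank ℝ E) (hR : 0 ≤ R)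
    (hu : HarmonicOnNhd u {x | R < ‖x‖}) (radial : ∀ x y, ‖x‖ = ‖y‖ → u x = u y) {c : ℝ}
    (hc : Tendsto (fun x ↦ u x / extPoissonKernel x 0) (Bornology.cobounded E) (𝓝 c))
    {x : E} (hx : R < ‖x‖) : u x = c * extPoissonKernel x 0 := by
  have : Nontrivial E := nontrivial_of_finrank_pos (R := ℝ) (by lia)
  have hx_pos : 0 < ‖x‖ := hR.trans_lt hx
  have kernel_pos {y : E} (hy : ‖x‖ ≤ ‖y‖) : 0 < extPoissonKernel y 0 :=
    extPoissonKernel_zero_right_pos (norm_pos_iff.1 (hx_pos.trans_le hy))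
  set b := u x / extPoissonKernel x 0
  have harmonicContOnCl {v : E → ℝ} (hv : HarmonicOnNhd v {y | R < ‖y‖}) :
      HarmonicContOnCl v {y | ‖x‖ < ‖y‖} := by
    refine (hv.mono ?_).harmonicContOnCl
    rw [closure_setOf_lt_norm hx_pos.ne']
    exact fun y hy ↦ hx.trans_le hy
  have eq_sphere : EqOn u (fun y ↦ b * extPoissonKernel y 0) (sphere 0 ‖x‖) := fun y hy ↦ by
    have hxy : ‖x‖ = ‖y‖ := (mem_sphere_zero_iff_norm.1 hy).symm
    simp only [extPoissonKernel_zero_right, b, ← hxy, radial x y hxy]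
    rw [← radial x y hxy, ← extPoissonKernel_zero_right, div_mul_cancel₀ _ (kernel_pos le_rfl).ne']
  have eq_exterior : EqOn u (fun y ↦ b * extPoissonKernel y 0) {y | ‖x‖ ≤ ‖y‖} :=
    eqOn_exterior_of_harmonicContOnCl hx_pos.ne' (harmonicContOnCl hu)
      (harmonicContOnCl (harmonicOnNhd_const_mul_extPoissonKernel_zero b hR)) eq_sphere
      (tendsto_zero_of_tendsto_div_extPoissonKernel_zero hE hc)
      (by simpa using (tendsto_extPoissonKernel_zero_cobounded hE).const_mul b)
  have b_eq : b = c := by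
    refine tendsto_nhds_unique (tendsto_const_nhds.congr' ?_) hc
    filter_upwards [tendsto_norm_cobounded_atTop.eventually_ge_atTop ‖x‖] with y hy
    rw [eq_exterior hy, mul_div_cancel_right₀ _ (kernel_pos hy).ne']
  rw [← b_eq]
  exact eq_exterior (le_refl ‖x‖)

end ExteriorHarmonic

section SphereIntegral

variable {E : Type*} [NormedAddCommGroup E] [InnerProductSpace ℝ E] [FiniteDimensional ℝ E]
  [MeasurableSpace E] [BorelSpace E] {μ : Measure E} {R : ℝ} {f : E → ℝ}

/-- The Poisson integral of `f` over the sphere of radius `R`, with respect to an arbitrary measure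
`μ` and without the normalizing constant of the Poisson kernel. -/
noncomputable def sphereExtPoissonIntegral (μ : Measure E) (R : ℝ) (f : E → ℝ) (x : E) : ℝ :=
  ∫ η in sphere 0 R, f η * extPoissonKernel x η ∂μ

theorem harmonicOnNhd_sphereExtPoissonIntegral (hf : IntegrableOn f (sphere 0 R) μ) :
    HarmonicOnNhd (sphereExtPoissonIntegral μ R f) {x | R < ‖x‖} := by
  have ne_of_mem {x η : E} (hx : R < ‖x‖) (hη : η ∈ sphere 0 R) : x ≠ η := by
    rintro rfl
    exact hx.ne' (mem_sphere_zero_iff_norm.1 hη)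
  exact harmonicOnNhd_setIntegral_mul isOpen_setOf_lt_norm (isCompact_sphere 0 R) hf
    (fun p hp ↦ contDiffAt_uncurry_extPoissonKernel (ne_of_mem hp.1 hp.2))
    fun η hη x hx ↦ harmonicAt_extPoissonKernel (ne_of_mem hx hη)

theorem tendsto_sphereExtPoissonIntegral_div_cobounded (hf : IntegrableOn f (sphere 0 R) μ) :
    Tendsto (fun x ↦ sphereExtPoissonIntegral μ R f x / extPoissonKernel x 0)
      (Bornology.cobounded E) (𝓝 (∫ η in sphere 0 R, f η ∂μ)) := by
  simp only [sphereExtPoissonIntegral, ← integral_div]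
  have : (Bornology.cobounded E).IsCountablyGenerated := by
    rw [← comap_norm_atTop]
    infer_instance
  refine tendsto_integral_filter_of_dominated_convergence (fun η ↦ ‖f η‖ * 2 ^ finrank ℝ E)
    ?_ ?_ (hf.norm.mul_const _) ?_
  · filter_upwards [tendsto_norm_cobounded_atTop.eventually_gt_atTop R] with x hx
    exact ((hf.mul_continuousOn (continuousOn_extPoissonKernel_sphere hx)
      (isCompact_sphere 0 R)).div_const _).aestronglyMeasurable
  · filter_upwards [tendsto_norm_cobounded_atTop.eventually_ge_atTop (2 * R),
      Bornology.eventually_ne_cobounded 0] with x hx hx0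
    refine ae_restrict_of_forall_mem isClosed_sphere.measurableSet fun η hη ↦ ?_
    rw [mul_div_assoc, norm_mul, Real.norm_eq_abs (_ / _)]
    gcongr
    exact abs_extPoissonKernel_div_le hx0 (by rwa [mem_sphere_zero_iff_norm.1 hη])
  · refine .of_forall fun η ↦ ?_
    simpa [mul_div_assoc] using (tendsto_extPoissonKernel_div_cobounded η).const_mul (f η)

theorem tendsto_sphereExtPoissonIntegral_cobounded (hE : 3 ≤ finrank ℝ E)
    (hf : IntegrableOn f (sphere 0 R) μ) :
    Tendsto (sphereExtPoissonIntegral μ R f) (Bornology.cobounded E) (𝓝 0) :=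
  tendsto_zero_of_tendsto_div_extPoissonKernel_zero hE
    (tendsto_sphereExtPoissonIntegral_div_cobounded hf)

omit [FiniteDimensional ℝ E] in
theorem sphereExtPoissonIntegral_map (L : E ≃ₗᵢ[ℝ] E) (hL : MeasurePreserving L μ μ) (x : E) :
    sphereExtPoissonIntegral μ R f (L x) = sphereExtPoissonIntegral μ R (f ∘ L) x := by
  have preimage_sphere : L ⁻¹' sphere 0 R = sphere 0 R := by
    ext
    simp
  simp only [sphereExtPoissonIntegral]
  rw [← hL.setIntegral_preimage_emb L.toHomeomorph.measurableEmbedding, preimage_sphere]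
  simp only [extPoissonKernel_map, comp_apply]

theorem sphereExtPoissonIntegral_one (hE : 3 ≤ finrank ℝ E) (hR : 0 ≤ R)
    (hμ : ∀ L : E ≃ₗᵢ[ℝ] E, MeasurePreserving L μ μ) (hμR : μ (sphere 0 R) ≠ ⊤) {x : E}
    (hx : R < ‖x‖) :
    sphereExtPoissonIntegral μ R 1 x = μ.real (sphere 0 R) * extPoissonKernel x 0 := by
  have integrable : IntegrableOn (1 : E → ℝ) (sphere 0 R) μ := integrableOn_const hμR
  refine eq_const_mul_extPoissonKernel_zero_of_radial hE hR
    (harmonicOnNhd_sphereExtPoissonIntegral integrable) (fun x y hxy ↦ ?_) ?_ hx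
  · rw [← Submodule.reflection_sub hxy, sphereExtPoissonIntegral_map _ (hμ _), Pi.one_comp]
  · simpa using tendsto_sphereExtPoissonIntegral_div_cobounded integrable

omit [FiniteDimensional ℝ E] [MeasurableSpace E] [BorelSpace E] in
theorem tendstoUniformlyOn_extPoissonKernel (hR : 0 ≤ R) {η₀ : E} (hη₀ : η₀ ∈ sphere 0 R)
    {V : Set E} (hV : V ∈ 𝓝 η₀) :
    TendstoUniformlyOn extPoissonKernel 0 (𝓝[{x | R < ‖x‖}] η₀) (sphere 0 R \ V) := by
  rw [mem_sphere_zero_iff_norm] at hη₀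
  obtain ⟨δ, hδ, hδV⟩ := Metric.mem_nhds_iff.1 hV
  let bound (x : E) : ℝ := (‖x‖ ^ 2 - R ^ 2) / (δ / 2) ^ finrank ℝ E
  have tendsto_bound : Tendsto bound (𝓝[{x | R < ‖x‖}] η₀) (𝓝 0) := by
    have : ContinuousAt bound η₀ := by fun_prop
    simpa [bound, hη₀] using this.continuousWithinAt.tendsto
  refine Metric.tendstoUniformlyOn_iff.2 fun ε hε ↦ ?_
  filter_upwards [tendsto_bound.eventually_lt_const hε, self_mem_nhdsWithin,
    nhdsWithin_le_nhds (ball_mem_nhds η₀ (half_pos hδ))] with x hxε hxR hxδ η hη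
  have norm_η : ‖η‖ = R := mem_sphere_zero_iff_norm.1 hη.1
  have half_le : δ / 2 ≤ ‖x - η‖ := by
    have hηδ : δ ≤ dist η η₀ := not_lt.1 fun h ↦ hη.2 (hδV h)
    rw [← dist_eq_norm]
    linarith [dist_triangle_left η η₀ x, mem_ball.1 hxδ]
  rw [Pi.zero_apply, dist_zero_left,
    Real.norm_of_nonneg (extPoissonKernel_nonneg (norm_η.trans_le (le_of_lt hxR)))]
  refine lt_of_le_of_lt ?_ hxε
  rw [extPoissonKernel, norm_η]
  have : 0 ≤ ‖x‖ ^ 2 - R ^ 2 := sub_nonneg.2 (pow_le_pow_left₀ hR (le_of_lt hxR) 2)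
  exact div_le_div_of_nonneg_left this (by positivity) (by gcongr)

theorem tendsto_sphereExtPoissonIntegral_nhdsWithin (hE : 3 ≤ finrank ℝ E) (hR : 0 < R)
    (hμ : ∀ L : E ≃ₗᵢ[ℝ] E, MeasurePreserving L μ μ) (hμR : μ (sphere 0 R) ≠ ⊤)
    (hμR_ne_zero : μ (sphere 0 R) ≠ 0) (hf : ContinuousOn f (sphere 0 R)) {η₀ : E}
    (hη₀ : η₀ ∈ sphere 0 R) :
    Tendsto (sphereExtPoissonIntegral μ R f) (𝓝[{x | R < ‖x‖}] η₀)
      (𝓝 (f η₀ * (μ.real (sphere 0 R) * extPoissonKernel η₀ 0))) := by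
  have hη₀_ne : η₀ ≠ 0 := ne_of_mem_sphere hη₀ hR.ne'
  have mass_pos : 0 < μ.real (sphere 0 R) * extPoissonKernel η₀ 0 :=
    mul_pos (ENNReal.toReal_pos hμR_ne_zero hμR) (extPoissonKernel_zero_right_pos hη₀_ne)
  refine tendsto_setIntegral_mul_of_peak (isCompact_sphere 0 R) hμR hf hη₀ mass_pos ?_
    (fun V hV hη₀V ↦ tendstoUniformlyOn_extPoissonKernel hR.le hη₀ (hV.mem_nhds hη₀V)) ?_ ?_
  · filter_upwards [self_mem_nhdsWithin] with x hx η hη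
    exact extPoissonKernel_nonneg ((mem_sphere_zero_iff_norm.1 hη).trans_le (le_of_lt hx))
  · refine ((continuousAt_extPoissonKernel hη₀_ne).continuousWithinAt.const_mul _).congr' ?_
    filter_upwards [self_mem_nhdsWithin] with x hx
    rw [← sphereExtPoissonIntegral_one hE hR.le hμ hμR hx]
    simp only [sphereExtPoissonIntegral, Pi.one_apply, one_mul]
  · filter_upwards [self_mem_nhdsWithin] with x hx
    exact (continuousOn_extPoissonKernel_sphere hx).aestronglyMeasurable
      isClosed_sphere.measurableSet

end SphereIntegral

section HausdorffSphere

variable {E : Type*} [NormedAddCommGroup E] [InnerProductSpace ℝ E]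

theorem norm_stereoToFun_le_two {v x : E} (hx : ‖x‖ ≤ 1) (hvx : ⟪v, x⟫_ℝ ≤ 0) :
    ‖stereoToFun v x‖ ≤ 2 := by
  have hden : 1 ≤ 1 - ⟪v, x⟫_ℝ := by linarith
  have hproj : ‖(ℝ ∙ v)ᗮ.orthogonalProjectionOnto x‖ ≤ 1 :=
    ((ℝ ∙ v)ᗮ.norm_orthogonalProjectionOnto_apply_le x).trans hx
  rw [stereoToFun_apply, innerSL_apply_apply, norm_smul, Real.norm_of_nonneg (by positivity)]
  calc 2 / (1 - ⟪v, x⟫_ℝ) * ‖(ℝ ∙ v)ᗮ.orthogonalProjectionOnto x‖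
      ≤ 2 / 1 * 1 := by gcongr
    _ = 2 := by norm_num

theorem sphere_inter_inner_nonpos_subset_image_stereoInvFunAux {v : E} (hv : ‖v‖ = 1) :
    sphere (0 : E) 1 ∩ {x | ⟪v, x⟫_ℝ ≤ 0} ⊆
      (stereoInvFunAux v ∘ (↑)) '' closedBall (0 : (ℝ ∙ v)ᗮ) 2 := by
  rintro x ⟨hx, hvx : ⟪v, x⟫_ℝ ≤ 0⟩
  have hxv : x ≠ v := by
    rintro rfl
    rw [real_inner_self_eq_norm_sq, hv] at hvx
    norm_num at hvx
  refine ⟨stereoToFun v x, ?_, congr_arg Subtype.val (stereo_left_inv hv (x := ⟨x, hx⟩) hxv)⟩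
  simpa using norm_stereoToFun_le_two (mem_sphere_zero_iff_norm.1 hx).le hvx

theorem closedBall_subset_image_orthogonalProjectionOnto_sphere {v : E} (hv : ‖v‖ = 1) :
    closedBall (0 : (ℝ ∙ v)ᗮ) 1 ⊆ (ℝ ∙ v)ᗮ.orthogonalProjectionOnto '' sphere 0 1 := by
  intro w hw
  have hw : ‖w‖ ^ 2 ≤ 1 := pow_le_one₀ (norm_nonneg w) (mem_closedBall_zero_iff.1 hw)
  have hwv : ⟪(w : E), √(1 - ‖w‖ ^ 2) • v⟫_ℝ = 0 := by
    rw [inner_smul_right, Submodule.mem_orthogonal_singleton_iff_inner_left.1 w.2, mul_zero]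
  refine ⟨w + √(1 - ‖w‖ ^ 2) • v, ?_, ?_⟩
  · rw [mem_sphere_zero_iff_norm, ← sq_eq_sq₀ (norm_nonneg _) zero_le_one, norm_add_sq_real, hwv,
      norm_smul, hv, mul_one, Real.norm_eq_abs, sq_abs, Real.sq_sqrt (by linarith),
      Submodule.coe_norm]
    ring
  · rw [map_add, map_smul, Submodule.orthogonalProjectionOnto_mem_subspace_eq_self,
      Submodule.orthogonalProjectionOnto_orthogonalComplement_singleton_eq_zero, smul_zero,
      add_zero]

variable [FiniteDimensional ℝ E]

theorem cast_finrank_orthogonal_span_singleton {v : E} (hv : v ≠ 0) :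
    (finrank ℝ (ℝ ∙ v)ᗮ : ℝ) = finrank ℝ E - 1 := by
  rw [eq_sub_iff_add_eq, ← Submodule.finrank_add_finrank_orthogonal (ℝ ∙ v),
    finrank_span_singleton hv, Nat.cast_add, Nat.cast_one, add_comm]

variable [MeasurableSpace E] [BorelSpace E]

theorem hausdorffMeasure_sphere_inter_inner_nonpos_lt_top {v : E} (hv : ‖v‖ = 1) :
    μH[(finrank ℝ E : ℝ) - 1] (sphere (0 : E) 1 ∩ {x | ⟪v, x⟫_ℝ ≤ 0}) < ⊤ := by
  rw [← cast_finrank_orthogonal_span_singleton (norm_ne_zero_iff.1 (hv.trans_ne one_ne_zero))]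
  have hsmooth : ContDiff ℝ 1 (stereoInvFunAux v ∘ ((↑) : (ℝ ∙ v)ᗮ → E)) :=
    contDiff_stereoInvFunAux.comp (ℝ ∙ v)ᗮ.subtypeL.contDiff
  obtain ⟨K, hK⟩ := hsmooth.contDiffOn.exists_lipschitzOnWith one_ne_zero
    (convex_closedBall (0 : (ℝ ∙ v)ᗮ) 2) (isCompact_closedBall 0 2)
  calc μH[(finrank ℝ (ℝ ∙ v)ᗮ : ℝ)] (sphere (0 : E) 1 ∩ {x | ⟪v, x⟫_ℝ ≤ 0})
      ≤ μH[(finrank ℝ (ℝ ∙ v)ᗮ : ℝ)]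
          ((stereoInvFunAux v ∘ (↑)) '' closedBall (0 : (ℝ ∙ v)ᗮ) 2) :=
        measure_mono (sphere_inter_inner_nonpos_subset_image_stereoInvFunAux hv)
    _ ≤ (K : ENNReal) ^ (finrank ℝ (ℝ ∙ v)ᗮ : ℝ) *
          μH[(finrank ℝ (ℝ ∙ v)ᗮ : ℝ)] (closedBall (0 : (ℝ ∙ v)ᗮ) 2) :=
        hK.hausdorffMeasure_image_le (Nat.cast_nonneg _)
    _ < ⊤ := ENNReal.mul_lt_top
        (ENNReal.rpow_lt_top_of_nonneg (Nat.cast_nonneg _) ENNReal.coe_ne_top)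
        measure_closedBall_lt_top

variable [Nontrivial E]

theorem hausdorffMeasure_sphere_zero_one_lt_top :
    μH[(finrank ℝ E : ℝ) - 1] (sphere (0 : E) 1) < ⊤ := by
  obtain ⟨v, hv⟩ := exists_norm_eq E zero_le_one
  have hcover : sphere (0 : E) 1 ⊆
      sphere 0 1 ∩ {x | ⟪v, x⟫_ℝ ≤ 0} ∪ sphere 0 1 ∩ {x | ⟪-v, x⟫_ℝ ≤ 0} := by
    intro x hx
    rcases le_total ⟪v, x⟫_ℝ 0 with h | h
    · exact Or.inl ⟨hx, h⟩
    · exact Or.inr ⟨hx, by simpa using h⟩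
  exact (measure_mono hcover).trans_lt <| measure_union_lt_top
    (hausdorffMeasure_sphere_inter_inner_nonpos_lt_top hv)
    (hausdorffMeasure_sphere_inter_inner_nonpos_lt_top ((norm_neg v).trans hv))

theorem hausdorffMeasure_sphere_zero_one_pos :
    0 < μH[(finrank ℝ E : ℝ) - 1] (sphere (0 : E) 1) := by
  obtain ⟨v, hv⟩ := exists_norm_eq E zero_le_one
  rw [← cast_finrank_orthogonal_span_singleton (norm_ne_zero_iff.1 (hv.trans_ne one_ne_zero))]
  calc 0 < μH[(finrank ℝ (ℝ ∙ v)ᗮ : ℝ)] (closedBall (0 : (ℝ ∙ v)ᗮ) 1) :=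
        measure_closedBall_pos _ 0 one_pos
    _ ≤ μH[(finrank ℝ (ℝ ∙ v)ᗮ : ℝ)] ((ℝ ∙ v)ᗮ.orthogonalProjectionOnto '' sphere 0 1) :=
        measure_mono (closedBall_subset_image_orthogonalProjectionOnto_sphere hv)
    _ ≤ μH[(finrank ℝ (ℝ ∙ v)ᗮ : ℝ)] (sphere (0 : E) 1) :=
        hausdorffMeasure_orthogonalProjectionOnto_le _ _ _ (Nat.cast_nonneg _)

open scoped Pointwise in
theorem hausdorffMeasure_sphere_zero {R : ℝ} (hR : 0 < R) :
    μH[(finrank ℝ E : ℝ) - 1] (sphere (0 : E) R) =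
      ENNReal.ofReal (R ^ (finrank ℝ E - 1)) * μH[(finrank ℝ E : ℝ) - 1] (sphere (0 : E) 1) := by
  have hsphere : sphere (0 : E) R = R • sphere (0 : E) 1 := by
    rw [smul_sphere' hR.ne', smul_zero, Real.norm_of_nonneg hR.le, mul_one]
  have hdim : (finrank ℝ E : ℝ) - 1 = (finrank ℝ E - 1 : ℕ) := by
    rw [Nat.cast_pred finrank_pos]
  rw [hsphere, hdim, Measure.hausdorffMeasure_smul₀ (Nat.cast_nonneg _) hR.ne',
    NNReal.rpow_natCast, ENNReal.smul_def, smul_eq_mul, ENNReal.ofReal_pow hR.le,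
    ENNReal.coe_pow, ← enorm_eq_nnnorm, Real.enorm_of_nonneg hR.le]

theorem hausdorffMeasure_sphere_zero_lt_top {R : ℝ} (hR : 0 < R) :
    μH[(finrank ℝ E : ℝ) - 1] (sphere (0 : E) R) < ⊤ := by
  rw [hausdorffMeasure_sphere_zero hR]
  exact ENNReal.mul_lt_top ENNReal.ofReal_lt_top hausdorffMeasure_sphere_zero_one_lt_top

theorem hausdorffMeasure_sphere_zero_pos {R : ℝ} (hR : 0 < R) :
    0 < μH[(finrank ℝ E : ℝ) - 1] (sphere (0 : E) R) := by
  rw [hausdorffMeasure_sphere_zero hR]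
  exact ENNReal.mul_pos (ENNReal.ofReal_pos.2 (by positivity)).ne'
    hausdorffMeasure_sphere_zero_one_pos.ne'

end HausdorffSphere

section Extension

variable {E : Type*} [NormedAddCommGroup E] [InnerProductSpace ℝ E] [FiniteDimensional ℝ E]
  {U : Set E} {u : E → ℝ}

theorem harmonicOnNhd_congr {v : E → ℝ} (hU : IsOpen U) (huv : EqOn u v U) :
    HarmonicOnNhd u U ↔ HarmonicOnNhd v U :=
  forall₂_congr fun _ hx ↦ harmonicAt_congr_nhds (huv.eventuallyEq_of_mem (hU.mem_nhds hx))

theorem harmonicContOnCl_extendFrom (hU : IsOpen U) (hu : HarmonicOnNhd u U)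
    (hu_frontier : ∀ y ∈ frontier U, ∃ c, Tendsto u (𝓝[U] y) (𝓝 c)) :
    HarmonicContOnCl (extendFrom U u) U := by
  have hu_cont : ContinuousOn u U := hu.contDiffOn.continuousOn
  refine ⟨(harmonicOnNhd_congr hU (extendFrom_extends hu_cont)).2 hu,
    continuousOn_extendFrom subset_rfl fun y hy ↦ ?_⟩
  by_cases hyU : y ∈ U
  · exact ⟨u y, hu_cont y hyU⟩
  · exact hu_frontier y (hU.frontier_eq ▸ ⟨hy, hyU⟩)

end Extension

section Euclidean

variable {d : ℕ} {R : ℝ} {f g : EuclideanSpace ℝ (Fin d) → ℝ}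

theorem harmonicOnNhd_iff_sum_fderiv {U : Set (EuclideanSpace ℝ (Fin d))} (hU : IsOpen U) :
    HarmonicOnNhd g U ↔ ContDiffOn ℝ 2 g U ∧ ∀ x ∈ U,
      ∑ i : Fin d, fderiv ℝ (fun y ↦ fderiv ℝ g y (EuclideanSpace.single i (1 : ℝ))) x
        (EuclideanSpace.single i (1 : ℝ)) = 0 := by
  have laplacian_eq (hg : ContDiffOn ℝ 2 g U) {x} (hx : x ∈ U) :
      ∑ i : Fin d, fderiv ℝ (fun y ↦ fderiv ℝ g y (EuclideanSpace.single i (1 : ℝ))) x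
        (EuclideanSpace.single i (1 : ℝ)) = Δ g x := by
    have hderiv := hasFDerivAt_fderiv (hg.contDiffAt (hU.mem_nhds hx))
    simp [laplacian_eq_sum_fderiv_fderiv g (EuclideanSpace.basisFun (Fin d) ℝ),
      (hderiv.clm_apply (hasFDerivAt_const _ x)).fderiv]
  constructor
  · exact fun hg ↦ ⟨hg.contDiffOn, fun x hx ↦
      (laplacian_eq hg.contDiffOn hx).trans (hg x hx).2.eq_of_nhds⟩
  · rintro ⟨hg, hg_zero⟩ x hx
    refine ⟨hg.contDiffAt (hU.mem_nhds hx), ?_⟩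
    filter_upwards [hU.mem_nhds hx] with y hy
    exact (laplacian_eq hg hy).symm.trans (hg_zero y hy)

theorem isExtDirichletSolution_iff (hR : R ≠ 0) :
    IsExtDirichletSolution d R f g ↔ HarmonicContOnCl g {x | R < ‖x‖} ∧ EqOn g f (sphere 0 R) ∧
      Tendsto g (Bornology.cobounded _) (𝓝 0) := by
  have harmonicContOnCl_iff : HarmonicContOnCl g {x | R < ‖x‖} ↔
      HarmonicOnNhd g {x | R < ‖x‖} ∧ ContinuousOn g {x | R ≤ ‖x‖} := by
    rw [← closure_setOf_lt_norm hR]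
    exact ⟨fun h ↦ ⟨h.1, h.2⟩, fun h ↦ ⟨h.1, h.2⟩⟩
  have eqOn_iff : EqOn g f (sphere 0 R) ↔ ∀ η, ‖η‖ = R → g η = f η := by
    simp only [EqOn, mem_sphere_zero_iff_norm]
  rw [harmonicContOnCl_iff, eqOn_iff, harmonicOnNhd_iff_sum_fderiv isOpen_setOf_lt_norm,
    ← comap_norm_atTop, and_assoc, and_assoc]
  rfl

theorem extPoissonIntegral_eq :
    extPoissonIntegral d R f =
      (unitSphereArea d * R)⁻¹ • sphereExtPoissonIntegral μH[(d : ℝ) - 1] R f := by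
  ext x
  rw [extPoissonIntegral, Pi.smul_apply, sphereExtPoissonIntegral, smul_eq_mul,
    ← integral_const_mul]
  refine setIntegral_congr_fun isClosed_sphere.measurableSet fun η hη ↦ ?_
  simp only [extPoissonKernel, finrank_euclideanSpace_fin, mem_sphere_zero_iff_norm.1 hη]
  rw [← div_div]
  ring

variable [NeZero d]

theorem hausdorffMeasure_euclideanSphere_lt_top (hR : 0 < R) :
    μH[(d : ℝ) - 1] (sphere (0 : EuclideanSpace ℝ (Fin d)) R) < ⊤ := by
  simpa using hausdorffMeasure_sphere_zero_lt_top (E := EuclideanSpace ℝ (Fin d)) hR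

theorem unitSphereArea_pos : 0 < unitSphereArea d :=
  ENNReal.toReal_pos
    (by simpa using (hausdorffMeasure_sphere_zero_pos (E := EuclideanSpace ℝ (Fin d)) one_pos).ne')
    (hausdorffMeasure_euclideanSphere_lt_top one_pos).ne

theorem hausdorffMeasure_real_euclideanSphere (hR : 0 < R) :
    (μH[(d : ℝ) - 1]).real (sphere (0 : EuclideanSpace ℝ (Fin d)) R) =
      R ^ (d - 1) * unitSphereArea d := by
  have := hausdorffMeasure_sphere_zero (E := EuclideanSpace ℝ (Fin d)) hR
  rw [finrank_euclideanSpace_fin] at this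
  rw [measureReal_def, this, ENNReal.toReal_mul, ENNReal.toReal_ofReal (by positivity),
    unitSphereArea]

theorem integrableOn_euclideanSphere (hR : 0 < R) (hf : ContinuousOn f (sphere 0 R)) :
    IntegrableOn f (sphere 0 R) μH[(d : ℝ) - 1] :=
  hf.integrableOn_of_subset_isCompact (isCompact_sphere 0 R) isClosed_sphere.measurableSet
    subset_rfl (hausdorffMeasure_euclideanSphere_lt_top hR).ne

theorem harmonicOnNhd_extPoissonIntegral (hR : 0 < R) (hf : ContinuousOn f (sphere 0 R)) :
    HarmonicOnNhd (extPoissonIntegral d R f) {x | R < ‖x‖} := by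
  rw [extPoissonIntegral_eq]
  exact (harmonicOnNhd_sphereExtPoissonIntegral (integrableOn_euclideanSphere hR hf)).const_smul

theorem tendsto_extPoissonIntegral_cobounded (hd : 3 ≤ d) (hR : 0 < R)
    (hf : ContinuousOn f (sphere 0 R)) :
    Tendsto (extPoissonIntegral d R f) (Bornology.cobounded _) (𝓝 0) := by
  rw [extPoissonIntegral_eq, ← smul_zero (unitSphereArea d * R)⁻¹]
  exact (tendsto_sphereExtPoissonIntegral_cobounded (by simpa using hd)
    (integrableOn_euclideanSphere hR hf)).const_smul _

theorem tendsto_extPoissonIntegral_nhdsWithin (hd : 3 ≤ d) (hR : 0 < R)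
    (hf : ContinuousOn f (sphere 0 R)) {η : EuclideanSpace ℝ (Fin d)} (hη : η ∈ sphere 0 R) :
    Tendsto (extPoissonIntegral d R f) (𝓝[{x | R < ‖x‖}] η) (𝓝 (f η)) := by
  have hmass : (unitSphereArea d * R)⁻¹ *
      ((μH[(d : ℝ) - 1]).real (sphere (0 : EuclideanSpace ℝ (Fin d)) R) *
        extPoissonKernel η 0) = 1 := by
    have hΩ : unitSphereArea d ≠ 0 := unitSphereArea_pos.ne'
    rw [hausdorffMeasure_real_euclideanSphere hR, extPoissonKernel_zero_right,
      finrank_euclideanSpace_fin, mem_sphere_zero_iff_norm.1 hη, ← pow_sub_one_mul (NeZero.ne d) R]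
    field_simp
  have hlim := (tendsto_sphereExtPoissonIntegral_nhdsWithin (by simpa using hd) hR
    (fun L ↦ L.toIsometryEquiv.measurePreserving_hausdorffMeasure ((d : ℝ) - 1))
    (hausdorffMeasure_euclideanSphere_lt_top hR).ne
    (by simpa using (hausdorffMeasure_sphere_zero_pos (E := EuclideanSpace ℝ (Fin d)) hR).ne')
    hf hη).const_smul (unitSphereArea d * R)⁻¹
  rw [smul_eq_mul, mul_left_comm, hmass, mul_one] at hlim
  rw [extPoissonIntegral_eq]
  exact hlim

theorem isExtDirichletSolution_extendFrom_extPoissonIntegral (hd : 3 ≤ d) (hR : 0 < R)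
    (hf : ContinuousOn f (sphere 0 R)) :
    IsExtDirichletSolution d R f (extendFrom {x | R < ‖x‖} (extPoissonIntegral d R f)) := by
  have harmonic := harmonicOnNhd_extPoissonIntegral hR hf
  have boundary {η : EuclideanSpace ℝ (Fin d)} (hη : η ∈ sphere 0 R) :=
    tendsto_extPoissonIntegral_nhdsWithin hd hR hf hη
  rw [← frontier_setOf_lt_norm hR.ne'] at boundary
  refine (isExtDirichletSolution_iff hR.ne').2 ⟨?_, fun η hη ↦ ?_, ?_⟩
  · exact harmonicContOnCl_extendFrom isOpen_setOf_lt_norm harmonic fun η hη ↦ ⟨f η, boundary hη⟩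
  · rw [← frontier_setOf_lt_norm hR.ne'] at hη
    exact extendFrom_eq (frontier_subset_closure hη) (boundary hη)
  · refine (tendsto_extPoissonIntegral_cobounded hd hR hf).congr' ?_
    filter_upwards [tendsto_norm_cobounded_atTop.eventually_gt_atTop R] with x hx
    exact (extendFrom_extends harmonic.contDiffOn.continuousOn x hx).symm

end Euclidean
/-- Let `d ≥ 3`, `R > 0`, `D_e = {‖x‖ > R}` and let `f` be continuous on
`Σ_R`.  Then the exterior Poisson integral `Hf` is harmonic on `D_e`, extends continuously to
`{‖x‖ ≥ R}` with boundary values `f` on `Σ_R`, and tends to `0` as `‖x‖ → ∞`; moreover it is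
the unique function with these three properties. -/
theorem exterior_dirichlet_problem
    (d : ℕ) (hd : 3 ≤ d) (R : ℝ) (hR : 0 < R)
    (f : EuclideanSpace ℝ (Fin d) → ℝ)
    (hf : ContinuousOn f (Metric.sphere (0 : EuclideanSpace ℝ (Fin d)) R)) :
    (∃ g : EuclideanSpace ℝ (Fin d) → ℝ, IsExtDirichletSolution d R f g ∧
        ∀ x : EuclideanSpace ℝ (Fin d), R < ‖x‖ → g x = extPoissonIntegral d R f x) ∧
    (∀ g₁ g₂ : EuclideanSpace ℝ (Fin d) → ℝ,
        IsExtDirichletSolution d R f g₁ → IsExtDirichletSolution d R f g₂ →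
        ∀ x : EuclideanSpace ℝ (Fin d), R ≤ ‖x‖ → g₁ x = g₂ x) := by
  have : NeZero d := ⟨by lia⟩
  refine ⟨⟨extendFrom {x | R < ‖x‖} (extPoissonIntegral d R f),
    isExtDirichletSolution_extendFrom_extPoissonIntegral hd hR hf, ?_⟩, fun g₁ g₂ h₁ h₂ ↦ ?_⟩
  · exact extendFrom_extends (harmonicOnNhd_extPoissonIntegral hR hf).contDiffOn.continuousOn
  · obtain ⟨harmonic₁, boundary₁, infty₁⟩ := (isExtDirichletSolution_iff hR.ne').1 h₁
    obtain ⟨harmonic₂, boundary₂, infty₂⟩ := (isExtDirichletSolution_iff hR.ne').1 h₂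
    exact eqOn_exterior_of_harmonicContOnCl hR.ne' harmonic₁ harmonic₂
      (boundary₁.trans boundary₂.symm) infty₁ infty₂
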